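/- For every n ≥ 3 there exists a homeomorphism f of [−1,1]ⁿ onto [−1,1]ⁿ with f ∈ W^{1,1}((−1,1)ⁿ, ℝⁿ) and a constant K > 0 such that |Df(x)| ≤ K·|J_f(x)| for Lⁿ-a.e. x (hence |Df|(f⁻¹(A)) ≤ K·Lⁿ(A) for all Borel sets A), but whose inverse f⁻¹ is not a Sobolev mapping (f⁻¹ is continuous but not absolutely continuous on lines, so f⁻¹ ∉ W^{1,1}_loc). -/

import Mathlib

open MeasureTheory Metric Set Filter
open scoped ENNReal Topology NNReal

noncomputable section

/-- `ℝⁿ` as a Euclidean space. -/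
abbrev En (n : ℕ) : Type := EuclideanSpace ℝ (Fin n)

/-- A smooth test function compactly supported inside the set `Ω`. -/
def SmoothTest {n : ℕ} (Ω : Set (En n)) (φ : En n → ℝ) : Prop :=
  ContDiff ℝ (⊤ : ℕ∞) φ ∧ HasCompactSupport φ ∧ tsupport φ ⊆ Ω

/-- Frobenius norm of an `m × n` array of reals. -/
def frobNorm {m n : ℕ} (M : Fin m → Fin n → ℝ) : ℝ :=
  Real.sqrt (∑ j, ∑ i, M j i ^ 2)

/-- `Df = σ ⬝ ν` is the polar decomposition of the distributional derivative of the
mapping `f : Ω → ℝᵐ`: `σ` is a matrix field of unit Frobenius norm `ν`-a.e., `ν` is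
carried by `Ω`, and the integration-by-parts formula holds against all smooth test
functions compactly supported in `Ω`.  In particular `ν = |Df|` is the total variation
measure of `Df` on `Ω`. -/
def IsVariationMeasure {n m : ℕ} (Ω : Set (En n)) (f : En n → En m)
    (σ : En n → Fin m → Fin n → ℝ) (ν : Measure (En n)) : Prop :=
  Measurable σ ∧ (∀ᵐ x ∂ν, frobNorm (σ x) = 1) ∧ ν Ωᶜ = 0 ∧
    ∀ φ : En n → ℝ, SmoothTest Ω φ → ∀ (j : Fin m) (i : Fin n),
      ∫ x in Ω, f x j * fderiv ℝ φ x (EuclideanSpace.single i 1) ∂volume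
        = - ∫ x, φ x * σ x j i ∂ν

/-- `f ∈ BV(Ω, ℝᵐ)` with total variation measure `ν`. -/
def MemBV {n m : ℕ} (Ω : Set (En n)) (f : En n → En m) (ν : Measure (En n)) : Prop :=
  IntegrableOn f Ω volume ∧ ν Ω < ⊤ ∧ ∃ σ, IsVariationMeasure Ω f σ ν

/-- `f ∈ BV_loc(Ω, ℝᵐ)` with total variation measure `ν`, finite on compact subsets of `Ω`. -/
def MemBVloc {n m : ℕ} (Ω : Set (En n)) (f : En n → En m) (ν : Measure (En n)) : Prop :=
  LocallyIntegrableOn f Ω volume ∧ (∀ C : Set (En n), IsCompact C → C ⊆ Ω → ν C < ⊤) ∧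
    ∃ σ, IsVariationMeasure Ω f σ ν

/-- Scalar version of `IsVariationMeasure`: `Du = σ ⬝ ν` with `|σ| = 1` `ν`-a.e. -/
def IsVariationMeasureS {n : ℕ} (Ω : Set (En n)) (u : En n → ℝ)
    (σ : En n → Fin n → ℝ) (ν : Measure (En n)) : Prop :=
  Measurable σ ∧ (∀ᵐ x ∂ν, Real.sqrt (∑ i, σ x i ^ 2) = 1) ∧ ν Ωᶜ = 0 ∧
    ∀ φ : En n → ℝ, SmoothTest Ω φ → ∀ i : Fin n,
      ∫ x in Ω, u x * fderiv ℝ φ x (EuclideanSpace.single i 1) ∂volume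
        = - ∫ x, φ x * σ x i ∂ν

/-- `u ∈ BV(Ω)` with total variation measure `ν`. -/
def MemBVs {n : ℕ} (Ω : Set (En n)) (u : En n → ℝ) (ν : Measure (En n)) : Prop :=
  IntegrableOn u Ω volume ∧ ν Ω < ⊤ ∧ ∃ σ, IsVariationMeasureS Ω u σ ν

/-- `u ∈ BV_loc(Ω)` with total variation measure `ν`. -/
def MemBVlocs {n : ℕ} (Ω : Set (En n)) (u : En n → ℝ) (ν : Measure (En n)) : Prop :=
  LocallyIntegrableOn u Ω volume ∧ (∀ C : Set (En n), IsCompact C → C ⊆ Ω → ν C < ⊤) ∧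
    ∃ σ, IsVariationMeasureS Ω u σ ν

/-- `z` is the approximate limit of `f` at `x`. -/
def ApproxLimAt {n m : ℕ} (f : En n → En m) (x : En n) (z : En m) : Prop :=
  Tendsto (fun r : ℝ =>
      (∫ y in Metric.ball x r, ‖f y - z‖ ∂volume) / (volume (Metric.ball x r)).toReal)
    (nhdsWithin 0 (Set.Ioi 0)) (nhds 0)

/-- `f̃⁻¹(A)`: the preimage of `A` under the precise representative (approximate limit)
of `f`; a point belongs to it iff the approximate limit of `f` exists there and lies in `A`. -/
def tildePreimage {n m : ℕ} (f : En n → En m) (A : Set (En m)) : Set (En n) :=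
  {x | ∃ z ∈ A, ApproxLimAt f x z}

/-- `f` has no jump part: its variation measure does not charge the approximate
discontinuity set of `f`. -/
def NoJumpPart {n m : ℕ} (f : En n → En m) (ν : Measure (En n)) : Prop :=
  ν {x | ¬ ∃ z, ApproxLimAt f x z} = 0

/-- `f` is a homeomorphism of `Ω₁` onto `Ω₂`, with inverse `g`. -/
def IsHomeoOn {n : ℕ} (f g : En n → En n) (Ω₁ Ω₂ : Set (En n)) : Prop :=
  ContinuousOn f Ω₁ ∧ ContinuousOn g Ω₂ ∧ MapsTo f Ω₁ Ω₂ ∧ MapsTo g Ω₂ Ω₁ ∧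
    (∀ x ∈ Ω₁, g (f x) = x) ∧ (∀ y ∈ Ω₂, f (g y) = y)

/-- `Df` is the (matrix of the) distributional derivative of `f` on `Ω`, given by a
locally integrable function: the weak-derivative integration-by-parts identity. -/
def IsWeakDerivOn {n : ℕ} (Ω : Set (En n)) (f : En n → En n)
    (Df : En n → Fin n → Fin n → ℝ) : Prop :=
  ∀ φ : En n → ℝ, SmoothTest Ω φ → ∀ (j i : Fin n),
    ∫ x in Ω, f x j * fderiv ℝ φ x (EuclideanSpace.single i 1) ∂volume
      = - ∫ x in Ω, φ x * Df x j i ∂volume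

/-- The open cube `(-1,1)ⁿ`. -/
def openSymCube (n : ℕ) : Set (En n) := {x | ∀ i, x i ∈ Set.Ioo (-1 : ℝ) 1}

/-- The closed cube `[-1,1]ⁿ`. -/
def closedSymCube (n : ℕ) : Set (En n) := {x | ∀ i, x i ∈ Set.Icc (-1 : ℝ) 1}

/-! ### Integration by parts off a countable set of coordinates -/

theorem integral_line_zero {m : ℕ} (i : Fin (m + 1)) (G G' : En (m + 1) → ℝ)
    (hG : Continuous G) (hc : HasCompactSupport G) (S : Set ℝ) (hS : S.Countable)
    (hd : ∀ p : En (m + 1), p i ∉ S →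
      HasLineDerivAt ℝ G (G' p) p (EuclideanSpace.single i 1))
    (hI : Integrable G') : ∫ p, G' p = 0 := by
  have e1 := EuclideanSpace.volume_preserving_symm_measurableEquiv_toLp (Fin (m + 1))
  have e2 := volume_preserving_piFinSuccAbove (fun _ : Fin (m + 1) => ℝ) i
  have e3 := (e2.comp e1).symm
    ((MeasurableEquiv.toLp 2 (Fin (m + 1) → ℝ)).symm.trans
      (MeasurableEquiv.piFinSuccAbove (fun _ : Fin (m + 1) => ℝ) i))
  set E := ((MeasurableEquiv.toLp 2 (Fin (m + 1) → ℝ)).symm.trans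
      (MeasurableEquiv.piFinSuccAbove (fun _ : Fin (m + 1) => ℝ) i)).symm with hE
  have hEval : ∀ q : ℝ × (Fin m → ℝ), E q = WithLp.toLp 2 (i.insertNth q.1 q.2) := by
    intro q
    rfl
  have h1 : ∫ p, G' p = ∫ q, G' (E q) := (e3.integral_comp' G').symm
  have h2 : Integrable (fun q => G' (E q)) := (e3.integrable_comp_emb E.measurableEmbedding).2 hI
  rw [h1, Measure.volume_eq_prod, integral_prod_symm _ (by rwa [← Measure.volume_eq_prod])]
  apply integral_eq_zero_of_ae
  refine Filter.Eventually.of_forall fun q => ?_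
  simp only [Pi.zero_apply]
  by_cases hintg : Integrable (fun t : ℝ => G' (E (t, q)))
  swap
  · exact integral_undef hintg
  have hshift : ∀ t s : ℝ, E (t, q) + s • EuclideanSpace.single i 1 = E (t + s, q) := by
    intro t s
    rw [hEval, hEval]
    ext j
    refine Fin.succAboveCases i ?_ (fun j => ?_) j
    · simp
    · simp [Fin.succAbove_ne]
  have hEcoord : ∀ t : ℝ, E (t, q) i = t := by
    intro t
    rw [hEval]
    simp
  have hder : ∀ t ∉ S, HasDerivAt (fun t : ℝ => G (E (t, q))) (G' (E (t, q))) t := by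
    intro t ht
    have h := hd (E (t, q)) (by rwa [hEcoord])
    unfold HasLineDerivAt at h
    simp only [hshift] at h
    have h3 : HasDerivAt (fun u : ℝ => u - t) 1 t := (hasDerivAt_id t).sub_const t
    have h4 := HasDerivAt.scomp (x := t) (g₁ := fun s => G (E (t + s, q))) (h := fun u => u - t)
      (by simpa using h) h3
    have h5 : (fun s => G (E (t + s, q))) ∘ (fun u => u - t) = fun t => G (E (t, q)) := by
      funext u
      simp
    rw [h5] at h4
    simpa using h4
  have hcont : Continuous (fun t : ℝ => G (E (t, q))) := by
    apply hG.comp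
    simp only [hEval]
    apply (PiLp.continuous_toLp 2 _).comp
    fun_prop
  obtain ⟨R, hR⟩ := hc.isCompact.isBounded.exists_norm_le
  have hz : ∀ t : ℝ, R < |t| → G (E (t, q)) = 0 := by
    intro t ht
    by_contra hne
    have h6 := hR _ (subset_tsupport _ (show E (t, q) ∈ Function.support G from hne))
    have h7 := PiLp.norm_apply_le (E (t, q)) i
    rw [hEcoord, Real.norm_eq_abs] at h7
    linarith
  have hlim := intervalIntegral_tendsto_integral hintg (tendsto_neg_atTop_atBot) (tendsto_id)
  refine tendsto_nhds_unique hlim ?_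
  apply tendsto_const_nhds.congr'
  filter_upwards [eventually_gt_atTop R, eventually_gt_atTop 0] with r hr hr0
  rw [integral_eq_of_hasDerivAt_off_countable (fun t => G (E (t, q))) _ hS hcont.continuousOn
    (fun t ht => hder t ht.2) hintg.intervalIntegrable]
  rw [hz _ (by simpa [abs_of_pos hr0] using hr), hz _ (by simpa [abs_of_pos hr0] using hr)]
  simp

theorem ibp {n : ℕ} (Ω : Set (En n)) (hΩ : IsOpen Ω) (F F' : En n → ℝ)
    (hF : ContinuousOn F Ω) (hF' : IntegrableOn F' Ω) (i : Fin n) (S : Set ℝ) (hS : S.Countable)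
    (hd : ∀ p ∈ Ω, p i ∉ S → HasLineDerivAt ℝ F (F' p) p (EuclideanSpace.single i 1))
    (φ : En n → ℝ) (hφ : SmoothTest Ω φ) :
    ∫ x in Ω, F x * fderiv ℝ φ x (EuclideanSpace.single i 1) = - ∫ x in Ω, φ x * F' x := by
  obtain ⟨hφs, hφc, hφt⟩ := hφ
  obtain ⟨m, rfl⟩ : ∃ m, n = m + 1 := ⟨n - 1, by have := i.2; omega⟩
  set e : En (m + 1) := EuclideanSpace.single i 1
  have hφcont : Continuous φ := hφs.continuous
  have hdφ : Continuous (fun x => fderiv ℝ φ x e) :=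
    (hφs.continuous_fderiv (by simp)).clm_apply continuous_const
  have hz : ∀ x, x ∉ tsupport φ → φ x = 0 := fun x hx => image_eq_zero_of_notMem_tsupport hx
  have hdz : ∀ x, x ∉ tsupport φ → fderiv ℝ φ x e = 0 := fun x hx => by
    rw [fderiv_of_notMem_tsupport ℝ hx]; simp
  have cont_mul : ∀ ψ : En (m + 1) → ℝ, Continuous ψ → (∀ x, x ∉ tsupport φ → ψ x = 0) →
      Continuous (fun x => ψ x * F x) := by
    intro ψ hψ hψ0
    rw [continuous_iff_continuousAt]
    intro x
    by_cases hx : x ∈ Ω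
    · exact hψ.continuousAt.mul (hF.continuousAt (hΩ.mem_nhds hx))
    · have : (fun x => ψ x * F x) =ᶠ[𝓝 x] fun _ => 0 := by
        filter_upwards [(isClosed_tsupport φ).isOpen_compl.mem_nhds (fun h => hx (hφt h))] with y hy
        simp [hψ0 y hy]
      exact (continuousAt_const).congr this.symm
  have hA : Continuous (fun x => φ x * F x) := cont_mul φ hφcont hz
  have hB : Continuous (fun x => fderiv ℝ φ x e * F x) := cont_mul _ hdφ hdz
  have hAc : HasCompactSupport (fun x => φ x * F x) := hφc.mul_right
  have hBc : HasCompactSupport (fun x => fderiv ℝ φ x e * F x) :=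
    HasCompactSupport.intro hφc (fun x hx => by simp [hdz x hx])
  have hBi : Integrable (fun x => fderiv ℝ φ x e * F x) := hB.integrable_of_hasCompactSupport hBc
  obtain ⟨C, hC⟩ := hφc.exists_bound_of_continuous hφcont
  have hDi' : IntegrableOn (fun x => φ x * F' x) Ω :=
    Integrable.bdd_mul hF' hφcont.aestronglyMeasurable (Filter.Eventually.of_forall hC)
  have hsupp : Function.support (fun x => φ x * F' x) ⊆ Ω := by
    intro x hx
    by_contra h
    exact hx (by simp [hz x (fun h' => h (hφt h'))])
  have hDi : Integrable (fun x => φ x * F' x) :=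
    (integrableOn_iff_integrable_of_support_subset hsupp).1 hDi'
  have hsupp2 : Function.support (fun x => F x * fderiv ℝ φ x e) ⊆ Ω := by
    intro x hx
    by_contra h
    exact hx (by simp [hdz x (fun h' => h (hφt h'))])
  have key := integral_line_zero i (fun x => φ x * F x)
    (fun x => fderiv ℝ φ x e * F x + φ x * F' x) hA hAc S hS (by
      intro p hp
      by_cases hpt : p ∈ tsupport φ
      · have h1 : HasLineDerivAt ℝ φ (fderiv ℝ φ p e) p e :=
          ((hφs.differentiable (by simp)).differentiableAt.hasFDerivAt).hasLineDerivAt e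
        have h2 := hd p (hφt hpt) hp
        have h3 := HasDerivAt.mul h1 h2
        unfold HasLineDerivAt
        simp only [zero_smul, add_zero] at h3
        exact h3
      · have h0 : (fun x => φ x * F x) =ᶠ[𝓝 p] fun _ => 0 := by
          filter_upwards [(isClosed_tsupport φ).isOpen_compl.mem_nhds hpt] with y hy
          simp [hz y hy]
        have : HasFDerivAt (fun x => φ x * F x) (0 : En (m + 1) →L[ℝ] ℝ) p :=
          (hasFDerivAt_const (0 : ℝ) p).congr_of_eventuallyEq h0
        have h4 := this.hasLineDerivAt e
        simpa [hz p hpt, hdz p hpt] using h4) (hBi.add hDi)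
  rw [integral_add hBi hDi] at key
  rw [setIntegral_eq_integral_of_forall_compl_eq_zero
      (fun x hx => Function.notMem_support.1 (fun h => hx (hsupp2 h))),
    setIntegral_eq_integral_of_forall_compl_eq_zero
      (fun x hx => Function.notMem_support.1 (fun h => hx (hsupp h)))]
  have : ∫ x, F x * fderiv ℝ φ x e = ∫ x, fderiv ℝ φ x e * F x := by
    congr 1; funext x; ring
  rw [this]
  linarith

/-! ### The one-variable homeomorphism `y ↦ y ^ 5` and its inverse -/

theorem pow5_strictMono : StrictMono (fun y : ℝ => y ^ 5) := Odd.strictMono_pow (by decide)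

theorem pow5_surj : Function.Surjective (fun y : ℝ => y ^ 5) := by
  apply Continuous.surjective (by fun_prop)
  · exact tendsto_pow_atTop (by norm_num)
  · have h1 : Tendsto (fun y : ℝ => (-y) ^ 5) atBot atTop :=
      (tendsto_pow_atTop (by norm_num)).comp tendsto_neg_atBot_atTop
    have h2 := tendsto_neg_atTop_atBot.comp h1
    refine h2.congr fun y => ?_
    simp only [Function.comp_apply]
    ring

def root5 : ℝ ≃ₜ ℝ := (pow5_strictMono.orderIsoOfSurjective _ pow5_surj).toHomeomorph.symm

theorem root5_pow (y : ℝ) : root5 y ^ 5 = y :=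
  (pow5_strictMono.orderIsoOfSurjective _ pow5_surj).apply_symm_apply y

theorem root5_of_pow (y : ℝ) : root5 (y ^ 5) = y :=
  pow5_strictMono.injective (root5_pow _)

theorem root5_zero : root5 0 = 0 := by
  have := root5_of_pow 0
  simpa using this

theorem root5_ne {y : ℝ} (hy : y ≠ 0) : root5 y ≠ 0 := by
  intro h
  have := root5_pow y
  rw [h] at this
  exact hy (by simpa using this.symm)

theorem root5_abs_le {y : ℝ} (hy : |y| ≤ 1) : |root5 y| ≤ 1 := by
  by_contra h
  push Not at h
  have h1 : 1 < |root5 y| ^ 5 := one_lt_pow₀ h (by norm_num)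
  rw [← abs_pow, root5_pow] at h1
  linarith

/-- derivative of `root5` away from zero -/
def droot (y : ℝ) : ℝ := (5 * root5 y ^ 4)⁻¹

theorem root5_hasDerivAt {y : ℝ} (hy : y ≠ 0) : HasDerivAt root5 (droot y) y := by
  have h := root5_ne hy
  have h1 : HasDerivAt (fun s : ℝ => s ^ 5) (5 * root5 y ^ 4) (root5 y) := by
    simpa using hasDerivAt_pow 5 (root5 y)
  exact HasDerivAt.of_local_left_inverse root5.continuous.continuousAt h1 (by positivity)
    (Filter.Eventually.of_forall root5_pow)

theorem droot_ge {y : ℝ} (hy : y ≠ 0) (h1 : |y| ≤ 1) : 1 / 5 ≤ droot y := by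
  have h := root5_ne hy
  have h2 := root5_abs_le h1
  have h3 : root5 y ^ 4 ≤ 1 := by
    have : |root5 y| ^ 4 ≤ 1 := pow_le_one₀ (abs_nonneg _) h2
    rwa [← abs_pow, abs_of_nonneg (by positivity)] at this
  have h4 : 0 < root5 y ^ 4 := by positivity
  unfold droot
  rw [one_div]
  exact inv_anti₀ (by positivity) (by linarith)

/-! ### The Moebius family fixing `±1` -/

def mob (z t : ℝ) : ℝ := (z + t) / (1 + t * z)
def mobz (z t : ℝ) : ℝ := (1 - t ^ 2) / (1 + t * z) ^ 2
def mobt (z t : ℝ) : ℝ := (1 - z ^ 2) / (1 + t * z) ^ 2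

theorem mob_den {z t : ℝ} (hz : |z| ≤ 1) (ht : |t| ≤ 1 / 3) :
    2 / 3 ≤ 1 + t * z ∧ 1 + t * z ≤ 4 / 3 := by
  have : |t * z| ≤ 1 / 3 := by
    rw [abs_mul]
    nlinarith [abs_nonneg t, abs_nonneg z]
  have := abs_le.1 this
  constructor <;> linarith

theorem mob_mem {z t : ℝ} (hz : |z| ≤ 1) (ht : |t| ≤ 1 / 3) : |mob z t| ≤ 1 := by
  have h := mob_den hz ht
  have hz' := abs_le.1 hz
  have ht' := abs_le.1 ht
  unfold mob
  rw [abs_le, le_div_iff₀ (by linarith), div_le_iff₀ (by linarith)]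
  constructor <;> nlinarith

theorem mob_inv {z t : ℝ} (hz : |z| ≤ 1) (ht : |t| ≤ 1 / 3) : mob (mob z t) (-t) = z := by
  have h := mob_den hz ht
  have ht' := abs_le.1 ht
  have h0 : 1 + t * z ≠ 0 := by linarith
  have h1 : 1 - t ^ 2 ≠ 0 := by nlinarith
  have h2 : 1 + -t * ((z + t) / (1 + t * z)) = (1 - t ^ 2) / (1 + t * z) := by
    field_simp; ring
  have h3 : (z + t) / (1 + t * z) + -t = z * (1 - t ^ 2) / (1 + t * z) := by
    rw [eq_div_iff h0, add_mul, div_mul_cancel₀ _ h0]; ring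
  unfold mob
  rw [h2, h3, div_div_div_cancel_right₀ h0, mul_div_cancel_right₀ _ h1]

theorem mob_zero (z : ℝ) : mob z 0 = z := by simp [mob]

theorem mobz_bounds {z t : ℝ} (hz : |z| ≤ 1) (ht : |t| ≤ 1 / 3) :
    1 / 2 ≤ mobz z t ∧ mobz z t ≤ 3 := by
  have h := mob_den hz ht
  have ht' := abs_le.1 ht
  have : 0 < (1 + t * z) ^ 2 := by have : 0 < 1 + t * z := by linarith
                                   positivity
  unfold mobz
  rw [le_div_iff₀ this, div_le_iff₀ this]
  constructor <;> nlinarith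

theorem mobt_bounds {z t : ℝ} (hz : |z| ≤ 1) (ht : |t| ≤ 1 / 3) :
    0 ≤ mobt z t ∧ mobt z t ≤ 3 := by
  have h := mob_den hz ht
  have hz' := abs_le.1 hz
  have : 0 < (1 + t * z) ^ 2 := by have : 0 < 1 + t * z := by linarith
                                   positivity
  unfold mobt
  rw [le_div_iff₀ this, div_le_iff₀ this]
  constructor <;> nlinarith

theorem mobt_lower {z t : ℝ} (hz : |z| ≤ 1 / 2) (ht : |t| ≤ 1 / 3) : 1 / 4 ≤ mobt z t := by
  have h := mob_den (hz.trans (by norm_num)) ht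
  have hz' := abs_le.1 hz
  have : 0 < (1 + t * z) ^ 2 := by have : 0 < 1 + t * z := by linarith
                                   positivity
  unfold mobt
  rw [le_div_iff₀ this]
  nlinarith

theorem mob_hasFDerivAt {E : Type*} [NormedAddCommGroup E] [NormedSpace ℝ E] {a b : E → ℝ}
    {a' b' : E →L[ℝ] ℝ} {p : E} (ha : HasFDerivAt a a' p) (hb : HasFDerivAt b b' p)
    (hz : |a p| ≤ 1) (ht : |b p| ≤ 1 / 3) :
    HasFDerivAt (fun q => mob (a q) (b q)) (mobz (a p) (b p) • a' + mobt (a p) (b p) • b') p := by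
  have h := mob_den hz ht
  have h0 : 1 + b p * a p ≠ 0 := by linarith
  have hden : HasFDerivAt (fun q => (1 + b q * a q)⁻¹)
      ((-((1 + b p * a p) ^ 2)⁻¹) • (b p • a' + a p • b')) p :=
    HasDerivAt.comp_hasFDerivAt (h₂ := fun u : ℝ => u⁻¹) (f := fun q => 1 + b q * a q) p
      (hasDerivAt_inv h0) ((hb.mul ha).const_add 1)
  have h1 := (ha.add hb).mul hden
  unfold mob
  simp only [div_eq_mul_inv]
  refine h1.congr_fderiv ?_
  ext w
  simp [mobz, mobt]
  field_simp
  ring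

theorem mob_continuousOn {E : Type*} [TopologicalSpace E] {a b : E → ℝ} {s : Set E}
    (ha : ContinuousOn a s) (hb : ContinuousOn b s) (hz : ∀ p ∈ s, |a p| ≤ 1)
    (ht : ∀ p ∈ s, |b p| ≤ 1 / 3) : ContinuousOn (fun q => mob (a q) (b q)) s := by
  unfold mob
  refine (ha.add hb).div ((continuousOn_const).add (hb.mul ha)) ?_
  intro p hp
  have := mob_den (hz p hp) (ht p hp)
  linarith

/-! ### The oscillating profile -/

def bmp : ContDiffBump (3 / 2 : ℝ) := ⟨1 / 4, 1 / 2, by norm_num, by norm_num⟩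

theorem bmp_zero {s : ℝ} (hs : s ≤ 1 ∨ 2 ≤ s) : bmp s = 0 := by
  apply bmp.zero_of_le_dist
  change 1 / 2 ≤ |s - 3 / 2|
  rcases hs with h | h
  · rw [abs_of_nonpos (by linarith)]; linarith
  · rw [abs_of_nonneg (by linarith)]; linarith

theorem bmp_one {s : ℝ} (h1 : 5 / 4 ≤ s) (h2 : s ≤ 7 / 4) : bmp s = 1 := by
  apply bmp.one_of_mem_closedBall
  change |s - 3 / 2| ≤ 1 / 4
  rw [abs_le]; constructor <;> linarith

theorem bmp_deriv_zero {s : ℝ} (hs : s < 1 ∨ 2 < s) : deriv bmp s = 0 := by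
  have : s ∉ tsupport bmp := by
    rw [bmp.tsupport_eq]
    change ¬ (|s - 3 / 2| ≤ 1 / 2)
    rw [abs_le]
    rintro ⟨h1, h2⟩
    rcases hs with h | h <;> linarith
  by_contra h
  exact this (support_deriv_subset h)

theorem bmp_deriv_bound : ∃ C : ℝ, 0 ≤ C ∧ ∀ s, |deriv bmp s| ≤ C := by
  have h1 : HasCompactSupport (deriv bmp) := bmp.hasCompactSupport.deriv
  have h2 : Continuous (deriv bmp) := (bmp.contDiff (n := 1)).continuous_deriv (by simp)
  obtain ⟨C, hC⟩ := h1.exists_bound_of_continuous h2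
  exact ⟨C, (norm_nonneg _).trans (hC 0), hC⟩

theorem bmp_hasDerivAt (s : ℝ) : HasDerivAt bmp (deriv bmp s) s :=
  ((bmp.contDiff (n := 1)).differentiable (by simp)).differentiableAt.hasDerivAt

def vk (k : ℕ) (x s : ℝ) : ℝ := (1 / 4) * (1 / 4) ^ k * bmp (2 ^ k * s) * Real.sin (16 ^ k * x)
def vkx (k : ℕ) (x s : ℝ) : ℝ :=
  (1 / 4) * 4 ^ k * bmp (2 ^ k * s) * Real.cos (16 ^ k * x)
def vks (k : ℕ) (x s : ℝ) : ℝ :=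
  (1 / 4) * (1 / 2) ^ k * deriv bmp (2 ^ k * s) * Real.sin (16 ^ k * x)

def vv (x s : ℝ) : ℝ := ∑' k, vk k x s
def vvx (x s : ℝ) : ℝ := ∑' k, vkx k x s
def vvs (x s : ℝ) : ℝ := ∑' k, vks k x s

theorem vk_bound (k : ℕ) (x s : ℝ) : ‖vk k x s‖ ≤ (1 / 4) * (1 / 4) ^ k := by
  unfold vk
  rw [norm_mul, norm_mul, Real.norm_of_nonneg (by positivity : (0:ℝ) ≤ 1 / 4 * (1 / 4) ^ k),
    Real.norm_of_nonneg bmp.nonneg, Real.norm_eq_abs]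
  calc _ ≤ (1 / 4 : ℝ) * (1 / 4) ^ k * 1 * 1 := by
        gcongr
        · exact bmp.le_one
        · exact Real.abs_sin_le_one _
    _ = _ := by ring

theorem geo4 : HasSum (fun k : ℕ => (1 / 4 : ℝ) * (1 / 4) ^ k) (1 / 3) := by
  have := (hasSum_geometric_of_lt_one (r := (1 / 4 : ℝ)) (by norm_num) (by norm_num)).mul_left
    (1 / 4)
  norm_num at this ⊢
  exact this

theorem vv_bound (x s : ℝ) : |vv x s| ≤ 1 / 3 :=
  tsum_of_norm_bounded geo4 (fun k => vk_bound k x s)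

theorem vv_cont : Continuous (fun q : ℝ × ℝ => vv q.1 q.2) := by
  refine continuous_tsum (u := fun k => (1 / 4 : ℝ) * (1 / 4) ^ k) ?_ geo4.summable
    (fun k q => vk_bound k q.1 q.2)
  intro k
  unfold vk
  have := bmp.continuous
  fun_prop

theorem vvs_bound : ∃ C : ℝ, 0 ≤ C ∧ ∀ x s, |vvs x s| ≤ C := by
  obtain ⟨C, hC0, hC⟩ := bmp_deriv_bound
  have hsum : HasSum (fun k : ℕ => (C * ((1 / 2 : ℝ) ^ k))) (C * 2) :=
    (hasSum_geometric_two).mul_left C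
  refine ⟨C * 2, by positivity, fun x s => ?_⟩
  rw [← Real.norm_eq_abs, vvs]
  refine tsum_of_norm_bounded hsum fun k => ?_
  unfold vks
  rw [norm_mul, norm_mul, Real.norm_of_nonneg (by positivity : (0:ℝ) ≤ 1 / 4 * (1 / 2) ^ k),
    Real.norm_eq_abs, Real.norm_eq_abs]
  calc _ ≤ (1 / 4 : ℝ) * (1 / 2) ^ k * C * 1 := by
        gcongr
        · exact hC _
        · exact Real.abs_sin_le_one _
    _ ≤ _ := by
        have : 0 ≤ C * (1 / 2 : ℝ) ^ k := by positivity
        nlinarith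

theorem bmp_pow4 (s : ℝ) : s ^ 4 * bmp s ≤ 16 := by
  by_cases h : s ≤ 1 ∨ 2 ≤ s
  · rw [bmp_zero h]; norm_num
  · push Not at h
    have h1 : s ^ 4 ≤ 2 ^ 4 := by
      apply pow_le_pow_left₀ (by linarith) (by linarith)
    have := bmp.le_one (x := s)
    have := bmp.nonneg (x := s)
    nlinarith

theorem vvx_bound (x s : ℝ) : s ^ 4 * |vvx x s| ≤ 16 / 3 := by
  have h0 : |s ^ 4| = s ^ 4 := abs_of_nonneg (by positivity)
  rw [← h0, ← abs_mul, vvx, ← tsum_mul_left]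
  have hsum := geo4.mul_left 16
  have : (16 / 3 : ℝ) = 16 * (1 / 3) := by norm_num
  rw [this, ← Real.norm_eq_abs]
  refine tsum_of_norm_bounded hsum fun k => ?_
  unfold vkx
  have hb := bmp_pow4 (2 ^ k * s)
  have e1 : s ^ 4 * ((1 / 4 : ℝ) * 4 ^ k * bmp (2 ^ k * s) * Real.cos (16 ^ k * x))
      = ((1 / 4) * (1 / 4) ^ k) * ((2 ^ k * s) ^ 4 * bmp (2 ^ k * s)) * Real.cos (16 ^ k * x) := by
    have : (4 : ℝ) ^ k = (1 / 4) ^ k * (2 ^ k) ^ 4 := by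
      rw [← pow_mul, mul_comm k 4, pow_mul, ← mul_pow]; norm_num
    rw [this]; ring
  rw [e1, norm_mul, norm_mul, Real.norm_of_nonneg (by positivity : (0:ℝ) ≤ 1 / 4 * (1 / 4) ^ k),
    Real.norm_of_nonneg (by have := bmp.nonneg (x := 2 ^ k * s); positivity), Real.norm_eq_abs]
  calc _ ≤ (1 / 4 : ℝ) * (1 / 4) ^ k * 16 * 1 := by
        gcongr
        exact Real.abs_cos_le_one _
    _ = _ := by ring

theorem vk_zero_of {k : ℕ} {x s : ℝ} (h : 2 ^ k * s ≤ 1 ∨ 2 ≤ 2 ^ k * s) : vk k x s = 0 := by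
  simp [vk, bmp_zero h]

theorem vkx_zero_of {k : ℕ} {x s : ℝ} (h : 2 ^ k * s ≤ 1 ∨ 2 ≤ 2 ^ k * s) : vkx k x s = 0 := by
  simp [vkx, bmp_zero h]

theorem vks_zero_of {k : ℕ} {x s : ℝ} (h : 2 ^ k * s < 1 ∨ 2 < 2 ^ k * s) : vks k x s = 0 := by
  simp [vks, bmp_deriv_zero h]

theorem pow_mul_nonpos {s : ℝ} (hs : s ≤ 0) (k : ℕ) : 2 ^ k * s ≤ 0 :=
  mul_nonpos_of_nonneg_of_nonpos (by positivity) hs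

theorem vv_nonpos {x s : ℝ} (hs : s ≤ 0) : vv x s = 0 := by
  unfold vv
  have : ∀ k, vk k x s = 0 := fun k => vk_zero_of (Or.inl (by linarith [pow_mul_nonpos hs k]))
  simp [this]

theorem vvx_nonpos {x s : ℝ} (hs : s ≤ 0) : vvx x s = 0 := by
  unfold vvx
  have : ∀ k, vkx k x s = 0 := fun k => vkx_zero_of (Or.inl (by linarith [pow_mul_nonpos hs k]))
  simp [this]

theorem vvs_nonpos {x s : ℝ} (hs : s ≤ 0) : vvs x s = 0 := by
  unfold vvs
  have : ∀ k, vks k x s = 0 := fun k => vks_zero_of (Or.inl (by linarith [pow_mul_nonpos hs k]))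
  simp [this]

theorem vk_hasFDerivAt (k : ℕ) (q : ℝ × ℝ) :
    HasFDerivAt (fun q : ℝ × ℝ => vk k q.1 q.2)
      (vkx k q.1 q.2 • ContinuousLinearMap.fst ℝ ℝ ℝ
        + vks k q.1 q.2 • ContinuousLinearMap.snd ℝ ℝ ℝ) q := by
  have hb : HasFDerivAt (fun q : ℝ × ℝ => bmp (2 ^ k * q.2))
      (deriv bmp (2 ^ k * q.2) • ((2 : ℝ) ^ k • ContinuousLinearMap.snd ℝ ℝ ℝ)) q :=
    HasDerivAt.comp_hasFDerivAt (h₂ := fun s => bmp s) (f := fun q : ℝ × ℝ => 2 ^ k * q.2) q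
      (bmp_hasDerivAt (2 ^ k * q.2)) ((hasFDerivAt_snd).const_mul ((2 : ℝ) ^ k))
  have hs : HasFDerivAt (fun q : ℝ × ℝ => Real.sin (16 ^ k * q.1))
      (Real.cos (16 ^ k * q.1) • ((16 : ℝ) ^ k • ContinuousLinearMap.fst ℝ ℝ ℝ)) q :=
    HasDerivAt.comp_hasFDerivAt (h₂ := Real.sin) (f := fun q : ℝ × ℝ => 16 ^ k * q.1) q
      (Real.hasDerivAt_sin (16 ^ k * q.1)) ((hasFDerivAt_fst).const_mul ((16 : ℝ) ^ k))
  have h := (hb.const_mul ((1 / 4 : ℝ) * (1 / 4) ^ k)).mul hs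
  unfold vk
  refine h.congr_fderiv ?_
  have e1 : (16 : ℝ) ^ k = 4 ^ k * 4 ^ k := by rw [← mul_pow]; norm_num
  have e2 : (1 / 4 : ℝ) ^ k * 4 ^ k = 1 := by rw [← mul_pow]; norm_num
  have e3 : (1 / 4 : ℝ) ^ k * 2 ^ k = (1 / 2) ^ k := by rw [← mul_pow]; norm_num
  ext
  · simp only [vkx, vks, add_apply, smul_apply,
      ContinuousLinearMap.comp_apply, ContinuousLinearMap.inl_apply, ContinuousLinearMap.coe_fst',
      ContinuousLinearMap.coe_snd', smul_eq_mul]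
    linear_combination (1 / 4 * (1 / 4) ^ k * bmp (2 ^ k * q.2) * Real.cos (16 ^ k * q.1)) * e1
      + (1 / 4 * 4 ^ k * bmp (2 ^ k * q.2) * Real.cos (16 ^ k * q.1)) * e2
  · simp only [vkx, vks, add_apply, smul_apply,
      ContinuousLinearMap.comp_apply, ContinuousLinearMap.inr_apply, ContinuousLinearMap.coe_fst',
      ContinuousLinearMap.coe_snd', smul_eq_mul]
    linear_combination (1 / 4 * deriv bmp (2 ^ k * q.2) * Real.sin (16 ^ k * q.1)) * e3

theorem vv_hasFDerivAt (q : ℝ × ℝ) (hq : q.2 ≠ 0) :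
    HasFDerivAt (fun q : ℝ × ℝ => vv q.1 q.2)
      (vvx q.1 q.2 • ContinuousLinearMap.fst ℝ ℝ ℝ
        + vvs q.1 q.2 • ContinuousLinearMap.snd ℝ ℝ ℝ) q := by
  rcases lt_or_gt_of_ne hq with h | h
  · rw [vvx_nonpos h.le, vvs_nonpos h.le]
    simp only [zero_smul, add_zero]
    refine (hasFDerivAt_const (0 : ℝ) q).congr_of_eventuallyEq ?_
    filter_upwards [(isOpen_lt continuous_snd continuous_const).mem_nhds h] with r hr
    exact vv_nonpos (le_of_lt hr)
  · obtain ⟨N, hN⟩ := pow_unbounded_of_one_lt (2 / q.2) (one_lt_two : (1 : ℝ) < 2)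
    have hN' : 2 < 2 ^ N * q.2 := by rwa [div_lt_iff₀ h] at hN
    have big : ∀ s : ℝ, 2 < 2 ^ N * s → ∀ k ∉ Finset.range N, 2 < 2 ^ k * s := by
      intro s hs k hk
      have hk' : N ≤ k := by simpa using hk
      have : (2 : ℝ) ^ N ≤ 2 ^ k := pow_le_pow_right₀ (by norm_num) hk'
      have hs0 : 0 < s := by
        by_contra hneg
        have := pow_mul_nonpos (not_lt.1 hneg) N
        linarith
      nlinarith
    have e0 : ∀ x s : ℝ, 2 < 2 ^ N * s → vv x s = ∑ k ∈ Finset.range N, vk k x s := fun x s hs =>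
      tsum_eq_sum fun k hk => vk_zero_of (Or.inr (big s hs k hk).le)
    have ex : vvx q.1 q.2 = ∑ k ∈ Finset.range N, vkx k q.1 q.2 :=
      tsum_eq_sum fun k hk => vkx_zero_of (Or.inr (big _ hN' k hk).le)
    have es : vvs q.1 q.2 = ∑ k ∈ Finset.range N, vks k q.1 q.2 :=
      tsum_eq_sum fun k hk => vks_zero_of (Or.inr (big _ hN' k hk))
    have hsum : HasFDerivAt (fun q : ℝ × ℝ => ∑ k ∈ Finset.range N, vk k q.1 q.2)
        (∑ k ∈ Finset.range N, (vkx k q.1 q.2 • ContinuousLinearMap.fst ℝ ℝ ℝ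
        + vks k q.1 q.2 • ContinuousLinearMap.snd ℝ ℝ ℝ)) q :=
      HasFDerivAt.fun_sum fun k _ => vk_hasFDerivAt k q
    rw [Finset.sum_add_distrib, ← Finset.sum_smul, ← Finset.sum_smul, ← ex, ← es] at hsum
    refine hsum.congr_of_eventuallyEq ?_
    have hopen : IsOpen {r : ℝ × ℝ | 2 < 2 ^ N * r.2} :=
      isOpen_lt continuous_const (by fun_prop)
    filter_upwards [hopen.mem_nhds hN'] with r hr
    exact e0 _ _ hr

/-- on the `k`-th core layer the profile is a pure sine. -/
theorem vv_core {k : ℕ} {x s : ℝ} (h1 : 5 / 4 < 2 ^ k * s) (h2 : 2 ^ k * s < 7 / 4) :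
    vv x s = (1 / 4) * (1 / 4) ^ k * Real.sin (16 ^ k * x) := by
  have hs0 : 0 < s := by
    by_contra hneg
    have := pow_mul_nonpos (not_lt.1 hneg) k
    linarith
  have : vv x s = vk k x s := by
    refine tsum_eq_single k fun j hj => vk_zero_of ?_
    rcases lt_or_gt_of_ne hj with h | h
    · left
      have : (2 : ℝ) ^ k = 2 ^ j * 2 ^ (k - j - 1) * 2 := by
        rw [← pow_add, ← pow_succ]; congr 1; omega
      have h3 : (1 : ℝ) ≤ 2 ^ (k - j - 1) := one_le_pow₀ (by norm_num)
      have h4 : 0 < 2 ^ j * s := by positivity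
      rw [this] at h2
      nlinarith
    · right
      have : (2 : ℝ) ^ j = 2 ^ k * 2 ^ (j - k - 1) * 2 := by
        rw [← pow_add, ← pow_succ]; congr 1; omega
      have h3 : (1 : ℝ) ≤ 2 ^ (j - k - 1) := one_le_pow₀ (by norm_num)
      rw [this]
      have h4 : 0 < 2 ^ k * s := by positivity
      nlinarith
  rw [this, vk, bmp_one h1.le h2.le]
  ring

/-! ### The maps -/

def ff {n : ℕ} (a b c : Fin n) (p : En n) : En n :=
  WithLp.toLp 2 fun j => if j = b then root5 (p b) else
    if j = c then mob (p c) (-vv (p a) (root5 (p b))) else p j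

def gg {n : ℕ} (a b c : Fin n) (p : En n) : En n :=
  WithLp.toLp 2 fun j => if j = b then p b ^ 5 else
    if j = c then mob (p c) (vv (p a) (p b)) else p j

def DD {n : ℕ} (a b c : Fin n) (p : En n) (j i : Fin n) : ℝ :=
  if j = b then (if i = b then droot (p b) else 0) else
  if j = c then
    (if i = a then -(mobt (p c) (-vv (p a) (root5 (p b))) * vvx (p a) (root5 (p b))) else 0)
    + (if i = b then
        -(mobt (p c) (-vv (p a) (root5 (p b))) * (vvs (p a) (root5 (p b)) * droot (p b))) else 0)
    + (if i = c then mobz (p c) (-vv (p a) (root5 (p b))) else 0)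
  else if i = j then 1 else 0

theorem ff_b {n : ℕ} (a b c : Fin n) (p : En n) : ff a b c p b = root5 (p b) := by simp [ff]

theorem ff_c {n : ℕ} (a b c : Fin n) (hbc : b < c) (p : En n) :
    ff a b c p c = mob (p c) (-vv (p a) (root5 (p b))) := by
  simp [ff, hbc.ne']

theorem ff_o {n : ℕ} (a b c : Fin n) (p : En n) {j : Fin n} (hb : j ≠ b) (hc : j ≠ c) :
    ff a b c p j = p j := by simp [ff, hb, hc]

theorem gg_b {n : ℕ} (a b c : Fin n) (p : En n) : gg a b c p b = p b ^ 5 := by simp [gg]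

theorem gg_c {n : ℕ} (a b c : Fin n) (hbc : b < c) (p : En n) :
    gg a b c p c = mob (p c) (vv (p a) (p b)) := by
  simp [gg, hbc.ne']

theorem gg_o {n : ℕ} (a b c : Fin n) (p : En n) {j : Fin n} (hb : j ≠ b) (hc : j ≠ c) :
    gg a b c p j = p j := by simp [gg, hb, hc]

theorem mem_closed_iff {n : ℕ} (p : En n) : p ∈ closedSymCube n ↔ ∀ j, |p j| ≤ 1 := by
  simp [closedSymCube, abs_le]

theorem open_sub_closed (n : ℕ) : openSymCube n ⊆ closedSymCube n :=
  fun _ hp j => Ioo_subset_Icc_self (hp j)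

theorem neg_vv_bound (x s : ℝ) : |-vv x s| ≤ 1 / 3 := by rw [abs_neg]; exact vv_bound x s

theorem coord_cont {n : ℕ} (j : Fin n) : Continuous (fun p : En n => p j) := by fun_prop

theorem ff_comp_cont {n : ℕ} (a b c : Fin n) (hbc : b < c) (j : Fin n) :
    ContinuousOn (fun p => ff a b c p j) (closedSymCube n) := by
  by_cases hb : j = b
  · subst hb
    simp only [ff_b]
    exact (root5.continuous.comp (coord_cont j)).continuousOn
  by_cases hc : j = c
  · subst hc
    simp only [ff_c a b j hbc]
    refine mob_continuousOn (coord_cont j).continuousOn ?_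
      (fun p hp => (mem_closed_iff p).1 hp j) (fun p _ => neg_vv_bound _ _)
    exact (vv_cont.comp ((coord_cont a).prodMk
      (root5.continuous.comp (coord_cont b)))).neg.continuousOn
  · simp only [ff_o a b c _ hb hc]
    exact (coord_cont j).continuousOn

theorem gg_comp_cont {n : ℕ} (a b c : Fin n) (hbc : b < c) (j : Fin n) :
    ContinuousOn (fun p => gg a b c p j) (closedSymCube n) := by
  by_cases hb : j = b
  · subst hb
    simp only [gg_b]
    exact ((coord_cont j).pow 5).continuousOn
  by_cases hc : j = c
  · subst hc
    simp only [gg_c a b j hbc]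
    refine mob_continuousOn (coord_cont j).continuousOn ?_
      (fun p hp => (mem_closed_iff p).1 hp j) (fun p _ => vv_bound _ _)
    exact (vv_cont.comp ((coord_cont a).prodMk (coord_cont b))).continuousOn
  · simp only [gg_o a b c _ hb hc]
    exact (coord_cont j).continuousOn

theorem cont_of_comp {n : ℕ} {s : Set (En n)} {F : En n → En n}
    (h : ∀ j, ContinuousOn (fun p => F p j) s) : ContinuousOn F s := by
  have : ContinuousOn (fun p => (WithLp.toLp 2 (fun j => F p j) : En n)) s :=
    (PiLp.continuous_toLp 2 _).comp_continuousOn (continuousOn_pi.2 h)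
  exact this

theorem homeo {n : ℕ} (a b c : Fin n) (hab : a < b) (hbc : b < c) :
    IsHomeoOn (ff a b c) (gg a b c) (closedSymCube n) (closedSymCube n) := by
  have hac := hab.trans hbc
  refine ⟨cont_of_comp (ff_comp_cont a b c hbc), cont_of_comp (gg_comp_cont a b c hbc),
    ?_, ?_, ?_, ?_⟩
  · intro p hp
    rw [mem_closed_iff] at hp ⊢
    intro j
    by_cases hb : j = b
    · subst hb; rw [ff_b]; exact root5_abs_le (hp j)
    by_cases hc : j = c
    · subst hc; rw [ff_c a b j hbc]; exact mob_mem (hp j) (neg_vv_bound _ _)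
    · rw [ff_o a b c p hb hc]; exact hp j
  · intro p hp
    rw [mem_closed_iff] at hp ⊢
    intro j
    by_cases hb : j = b
    · subst hb; rw [gg_b, abs_pow]; exact pow_le_one₀ (abs_nonneg _) (hp j)
    by_cases hc : j = c
    · subst hc; rw [gg_c a b j hbc]; exact mob_mem (hp j) (vv_bound _ _)
    · rw [gg_o a b c p hb hc]; exact hp j
  · intro p hp
    rw [mem_closed_iff] at hp
    ext j
    by_cases hb : j = b
    · subst hb; rw [gg_b, ff_b, root5_pow]
    by_cases hc : j = c
    · subst hc
      rw [gg_c a b j hbc, ff_c a b j hbc, ff_b, ff_o a b j p hab.ne hac.ne]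
      have := mob_inv (hp j) (neg_vv_bound (p a) (root5 (p b)))
      rwa [neg_neg] at this
    · rw [gg_o a b c _ hb hc, ff_o a b c p hb hc]
  · intro p hp
    rw [mem_closed_iff] at hp
    ext j
    by_cases hb : j = b
    · subst hb; rw [ff_b, gg_b, root5_of_pow]
    by_cases hc : j = c
    · subst hc
      rw [ff_c a b j hbc, gg_c a b j hbc, gg_b, gg_o a b j p hab.ne hac.ne, root5_of_pow]
      exact mob_inv (hp j) (vv_bound (p a) (p b))
    · rw [ff_o a b c _ hb hc, gg_o a b c p hb hc]

/-! ### Derivatives of `f` -/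

def rowL {n : ℕ} (r : Fin n → ℝ) : En n →L[ℝ] ℝ :=
  ∑ i, r i • (EuclideanSpace.proj i : En n →L[ℝ] ℝ)

theorem rowL_apply {n : ℕ} (r : Fin n → ℝ) (w : En n) : rowL r w = ∑ i, r i * w i := by
  simp [rowL]

theorem rowL_single {n : ℕ} (r : Fin n → ℝ) (i : Fin n) :
    rowL r (EuclideanSpace.single i 1) = r i := by
  simp [rowL_apply]

theorem coord_hasFDerivAt {n : ℕ} (j : Fin n) (p : En n) :
    HasFDerivAt (fun p : En n => p j) (EuclideanSpace.proj j : En n →L[ℝ] ℝ) p :=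
  (EuclideanSpace.proj j : En n →L[ℝ] ℝ).hasFDerivAt

theorem ff_hasFDerivAt {n : ℕ} (a b c : Fin n) (hbc : b < c) (j : Fin n) (p : En n)
    (hp : p ∈ closedSymCube n) (h0 : p b ≠ 0) :
    HasFDerivAt (fun q => ff a b c q j) (rowL (DD a b c p j)) p := by
  rw [mem_closed_iff] at hp
  have hr : HasFDerivAt (fun q : En n => root5 (q b))
      (droot (p b) • (EuclideanSpace.proj b : En n →L[ℝ] ℝ)) p :=
    HasDerivAt.comp_hasFDerivAt (h₂ := root5) (f := fun q : En n => q b) p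
      (root5_hasDerivAt h0) (coord_hasFDerivAt b p)
  by_cases hb : j = b
  · subst hb
    simp only [ff_b]
    refine hr.congr_fderiv ?_
    ext w
    simp [rowL_apply, DD]
  by_cases hc : j = c
  · subst hc
    simp only [ff_c a b j hbc]
    have hv : HasFDerivAt (fun q : En n => vv (q a) (root5 (q b)))
        ((vvx (p a) (root5 (p b)) • ContinuousLinearMap.fst ℝ ℝ ℝ
          + vvs (p a) (root5 (p b)) • ContinuousLinearMap.snd ℝ ℝ ℝ).comp
          ((EuclideanSpace.proj a : En n →L[ℝ] ℝ).prod
            (droot (p b) • (EuclideanSpace.proj b : En n →L[ℝ] ℝ)))) p :=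
      HasFDerivAt.comp (g := fun q : ℝ × ℝ => vv q.1 q.2)
        (f := fun q : En n => (q a, root5 (q b))) p
        (vv_hasFDerivAt (p a, root5 (p b)) (root5_ne h0)) ((coord_hasFDerivAt a p).prodMk hr)
    refine (mob_hasFDerivAt (coord_hasFDerivAt j p) hv.neg (hp j)
      (neg_vv_bound _ _)).congr_fderiv ?_
    ext w
    simp [rowL_apply, DD, hbc.ne', add_mul, Finset.sum_add_distrib]
    ring
  · simp only [ff_o a b c _ hb hc]
    refine (coord_hasFDerivAt j p).congr_fderiv ?_
    ext w
    simp [rowL_apply, DD, hb, hc]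

theorem DD_det {n : ℕ} (a b c : Fin n) (hab : a < b) (hbc : b < c) (p : En n) :
    Matrix.det (Matrix.of fun j i => DD a b c p j i)
      = droot (p b) * mobz (p c) (-vv (p a) (root5 (p b))) := by
  have hac := hab.trans hbc
  rw [Matrix.det_of_isLowerTriangular]
  · have : ∀ j, (Matrix.of fun j i => DD a b c p j i) j j
        = (if j = b then droot (p b) else 1) *
          (if j = c then mobz (p c) (-vv (p a) (root5 (p b))) else 1) := by
      intro j
      by_cases hb : j = b
      · subst hb; simp [DD, hbc.ne]
      by_cases hc : j = c
      · subst hc; simp [DD, hbc.ne', hac.ne']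
      · simp [DD, hb, hc]
    simp_rw [this]
    rw [Finset.prod_mul_distrib]
    simp
  · intro j i hij
    have hij : j < i := hij
    by_cases hb : j = b
    · subst hb; simp [DD, hij.ne']
    by_cases hc : j = c
    · subst hc
      simp [DD, hb, hij.ne', (hac.trans hij).ne', (hbc.trans hij).ne']
    · simp [DD, hb, hc, hij.ne']

theorem DD_bound {n : ℕ} (a b c : Fin n) : ∃ M : ℝ, 0 < M ∧ ∀ p ∈ closedSymCube n, p b ≠ 0 →
    ∀ j i, |DD a b c p j i| ≤ M * droot (p b) := by
  obtain ⟨C, hC0, hC⟩ := vvs_bound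
  refine ⟨200 + 3 * C, by positivity, fun p hp h0 j i => ?_⟩
  rw [mem_closed_iff] at hp
  have hd := droot_ge h0 (hp b)
  have hr := root5_ne h0
  have hd0 : 0 < droot (p b) := by linarith
  have hCd : 0 ≤ C * droot (p b) := by positivity
  unfold DD
  by_cases hb : j = b
  · rw [if_pos hb]
    split_ifs
    · rw [abs_of_pos hd0]; nlinarith
    · simp; positivity
  rw [if_neg hb]
  by_cases hc : j = c
  · rw [if_pos hc]
    set t := -vv (p a) (root5 (p b)) with ht
    have htb : |t| ≤ 1 / 3 := neg_vv_bound _ _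
    obtain ⟨hz1, hz2⟩ := mobz_bounds (hp c) htb
    obtain ⟨ht1, ht2⟩ := mobt_bounds (hp c) htb
    have hx : |vvx (p a) (root5 (p b))| ≤ (80 / 3) * droot (p b) := by
      have h4 : 0 < root5 (p b) ^ 4 := by positivity
      have := vvx_bound (p a) (root5 (p b))
      unfold droot
      rw [← div_eq_mul_inv, le_div_iff₀ (by positivity)]
      linarith
    have hs := hC (p a) (root5 (p b))
    have b1 : |mobt (p c) t * vvx (p a) (root5 (p b))| ≤ 80 * droot (p b) := by
      rw [abs_mul, abs_of_nonneg ht1]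
      calc _ ≤ 3 * ((80 / 3) * droot (p b)) := by gcongr
        _ = _ := by ring
    have b2 : |mobt (p c) t * (vvs (p a) (root5 (p b)) * droot (p b))|
        ≤ 3 * C * droot (p b) := by
      rw [abs_mul, abs_of_nonneg ht1, abs_mul, abs_of_pos hd0]
      calc _ ≤ 3 * (C * droot (p b)) := by gcongr
        _ = _ := by ring
    have b3 : |mobz (p c) t| ≤ 15 * droot (p b) := by
      rw [abs_of_nonneg (by linarith)]; linarith
    have ite_b : ∀ (P : Prop) [Decidable P] (x B : ℝ), 0 ≤ B → |x| ≤ B →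
        |if P then x else 0| ≤ B := by
      intro P _ x B hB hx
      split_ifs
      · exact hx
      · simpa using hB
    have c1 := ite_b (i = a) (-(mobt (p c) t * vvx (p a) (root5 (p b)))) (80 * droot (p b))
      (by positivity) (by rw [abs_neg]; exact b1)
    have c2 := ite_b (i = b) (-(mobt (p c) t * (vvs (p a) (root5 (p b)) * droot (p b))))
      (3 * C * droot (p b)) (by positivity) (by rw [abs_neg]; exact b2)
    have c3 := ite_b (i = c) (mobz (p c) t) (15 * droot (p b)) (by positivity) b3
    refine (abs_add_three _ _ _).trans ?_
    refine (add_le_add (add_le_add c1 c2) c3).trans ?_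
    nlinarith
  · rw [if_neg hc]
    split_ifs
    · simp; nlinarith
    · simp; positivity

theorem frob_le {n : ℕ} {A : Fin n → Fin n → ℝ} {B : ℝ} (hB : 0 ≤ B) (h : ∀ j i, |A j i| ≤ B) :
    frobNorm A ≤ n * B := by
  unfold frobNorm
  apply Real.sqrt_le_iff.2
  refine ⟨by positivity, ?_⟩
  calc ∑ j, ∑ i, A j i ^ 2 ≤ ∑ _j : Fin n, ∑ _i : Fin n, B ^ 2 := by
        refine Finset.sum_le_sum fun j _ => Finset.sum_le_sum fun i _ => ?_
        exact sq_le_sq' (abs_le.1 (h j i)).1 (abs_le.1 (h j i)).2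
    _ = (n * B) ^ 2 := by simp; ring

theorem entry_le_frob {n : ℕ} (A : Fin n → Fin n → ℝ) (j i : Fin n) : |A j i| ≤ frobNorm A := by
  unfold frobNorm
  apply Real.abs_le_sqrt
  calc A j i ^ 2 ≤ ∑ i, A j i ^ 2 :=
        Finset.single_le_sum (f := fun i => A j i ^ 2) (fun _ _ => sq_nonneg _) (Finset.mem_univ i)
    _ ≤ _ := Finset.single_le_sum (f := fun j => ∑ i, A j i ^ 2)
        (fun _ _ => Finset.sum_nonneg fun _ _ => sq_nonneg _) (Finset.mem_univ j)

theorem DD_frob {n : ℕ} (a b c : Fin n) (hab : a < b) (hbc : b < c) : ∃ K : ℝ, 0 < K ∧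
    ∀ p ∈ closedSymCube n, p b ≠ 0 →
      frobNorm (DD a b c p) ≤ K * |Matrix.det (Matrix.of fun j i => DD a b c p j i)| := by
  obtain ⟨M, hM, h⟩ := DD_bound a b c
  have hn : 0 < (n : ℝ) := by exact_mod_cast (Nat.zero_le _).trans_lt b.2
  refine ⟨2 * n * M, by positivity, fun p hp h0 => ?_⟩
  have hp' := (mem_closed_iff p).1 hp
  have hd : 0 < droot (p b) := by linarith [droot_ge h0 (hp' b)]
  obtain ⟨hz1, hz2⟩ := mobz_bounds (hp' c) (neg_vv_bound (p a) (root5 (p b)))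
  rw [DD_det a b c hab hbc, abs_of_nonneg (by positivity)]
  refine (frob_le (by positivity) (h p hp h0)).trans ?_
  have : 0 ≤ n * (M * droot (p b)) := by positivity
  nlinarith

/-! ### Measure-theoretic facts about `f` -/

theorem openCube_isOpen (n : ℕ) : IsOpen (openSymCube n) := by
  have : openSymCube n = ⋂ i, (fun p : En n => p i) ⁻¹' Ioo (-1 : ℝ) 1 := by
    ext p; simp [openSymCube]
  rw [this]
  exact isOpen_iInter_of_finite fun i => isOpen_Ioo.preimage (coord_cont i)

theorem box_isCompact (n : ℕ) (l u : ℝ) :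
    IsCompact {p : En n | ∀ i, p i ∈ Icc l u} := by
  have h := isCompact_univ_pi (fun _ : Fin n => isCompact_Icc (a := l) (b := u))
  have := h.image (PiLp.continuous_toLp 2 (fun _ : Fin n => ℝ))
  convert this using 1
  ext p
  constructor
  · intro hp
    exact ⟨fun i => p i, fun i _ => hp i, rfl⟩
  · rintro ⟨q, hq, rfl⟩ i
    exact hq i (mem_univ i)

theorem closedCube_isCompact (n : ℕ) : IsCompact (closedSymCube n) := box_isCompact n (-1) 1

theorem plane_null {n : ℕ} (b : Fin n) : volume {p : En n | p b = 0} = 0 := by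
  have h := Measure.addHaar_submodule (volume : Measure (En n))
    (LinearMap.ker ((EuclideanSpace.proj b : En n →L[ℝ] ℝ) : En n →ₗ[ℝ] ℝ)) ?_
  · convert h using 2
    ext p
    simp
  · intro ht
    have : (EuclideanSpace.single b (1 : ℝ) : En n) ∈
        LinearMap.ker ((EuclideanSpace.proj b : En n →L[ℝ] ℝ) : En n →ₗ[ℝ] ℝ) := by
      rw [ht]; trivial
    simp at this

theorem plane_ae {n : ℕ} (b : Fin n) : ∀ᵐ p : En n, p b ≠ 0 := by
  have := plane_null b
  rw [ae_iff]
  simpa using this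

theorem det_CLM {n : ℕ} (M : Matrix (Fin n) (Fin n) ℝ) :
    (Matrix.toEuclideanCLM (𝕜 := ℝ) M : En n →L[ℝ] En n).det = M.det := by
  unfold ContinuousLinearMap.det
  rw [Matrix.coe_toEuclideanCLM_eq_toEuclideanLin]
  unfold Matrix.toEuclideanLin
  rw [Matrix.toLpLin_eq_toLin, LinearMap.det_toLin]

theorem ff_hasFDerivAt_full {n : ℕ} (a b c : Fin n) (hbc : b < c) (p : En n)
    (hp : p ∈ closedSymCube n) (h0 : p b ≠ 0) (s : Set (En n)) :
    HasFDerivWithinAt (ff a b c)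
      (Matrix.toEuclideanCLM (𝕜 := ℝ) (Matrix.of fun j i => DD a b c p j i)) s p := by
  rw [hasFDerivWithinAt_euclidean]
  intro j
  refine ((ff_hasFDerivAt a b c hbc j p hp h0).congr_fderiv ?_).hasFDerivWithinAt
  ext w
  rw [rowL_apply]
  simp [Matrix.ofLp_toEuclideanCLM, Matrix.mulVec, dotProduct]

theorem area {n : ℕ} (a b c : Fin n) (hab : a < b) (hbc : b < c) {K : ℝ} (hK : 0 < K)
    (h : ∀ p ∈ closedSymCube n, p b ≠ 0 →
      frobNorm (DD a b c p) ≤ K * |Matrix.det (Matrix.of fun j i => DD a b c p j i)|)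
    (A : Set (En n)) (hA : MeasurableSet A) :
    ∫⁻ x in ff a b c ⁻¹' A ∩ openSymCube n, ENNReal.ofReal (frobNorm (DD a b c x))
      ≤ ENNReal.ofReal K * volume A := by
  have hQ := (openCube_isOpen n).measurableSet
  have hm : MeasurableSet (ff a b c ⁻¹' A ∩ openSymCube n) := by
    have hc : ContinuousOn (ff a b c) (openSymCube n) :=
      (homeo a b c hab hbc).1.mono (open_sub_closed n)
    have hr := (continuousOn_iff_continuous_domRestrict.1 hc).measurable
    have := (MeasurableEmbedding.subtype_coe hQ).measurableSet_image.2 (hr hA)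
    convert this using 1
    ext p
    simp [and_comm]
  set s := ff a b c ⁻¹' A ∩ openSymCube n ∩ {p | p b ≠ 0} with hs
  have hZ : MeasurableSet {p : En n | p b ≠ 0} :=
    (isOpen_ne.preimage (coord_cont b)).measurableSet
  have hsm : MeasurableSet s := hm.inter hZ
  have hae : (ff a b c ⁻¹' A ∩ openSymCube n : Set (En n)) =ᵐ[volume] s := by
    filter_upwards [plane_ae b] with p hp
    refine propext ⟨fun hq => ⟨hq, hp⟩, fun hq => hq.1⟩
  rw [Measure.restrict_congr_set hae]
  have hsub : ∀ p ∈ s, p ∈ closedSymCube n ∧ p b ≠ 0 :=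
    fun p hp => ⟨open_sub_closed n hp.1.2, hp.2⟩
  have hchg := lintegral_abs_det_fderiv_eq_addHaar_image (volume : Measure (En n)) (s := s)
    (f := ff a b c)
    (f' := fun p => Matrix.toEuclideanCLM (𝕜 := ℝ) (Matrix.of fun j i => DD a b c p j i)) hsm
    (fun p hp => ff_hasFDerivAt_full a b c hbc p (hsub p hp).1 (hsub p hp).2 s)
    (fun p hp q hq hpq => by
      have hl := (homeo a b c hab hbc).2.2.2.2.1
      rw [← hl p (hsub p hp).1, ← hl q (hsub q hq).1, hpq])
  calc ∫⁻ x in s, ENNReal.ofReal (frobNorm (DD a b c x))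
      ≤ ∫⁻ x in s, ENNReal.ofReal K * ENNReal.ofReal
          |(Matrix.toEuclideanCLM (𝕜 := ℝ) (Matrix.of fun j i => DD a b c x j i)
            : En n →L[ℝ] En n).det| := by
        refine setLIntegral_mono' hsm fun p hp => ?_
        rw [det_CLM, ← ENNReal.ofReal_mul hK.le]
        exact ENNReal.ofReal_le_ofReal (h p (hsub p hp).1 (hsub p hp).2)
    _ = ENNReal.ofReal K * volume (ff a b c '' s) := by
        rw [lintegral_const_mul' _ _ ENNReal.ofReal_ne_top, hchg]
    _ ≤ _ := by
        gcongr
        rintro _ ⟨p, hp, rfl⟩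
        exact hp.1.1

theorem ff_integrable {n : ℕ} (a b c : Fin n) (hab : a < b) (hbc : b < c) :
    IntegrableOn (ff a b c) (openSymCube n) :=
  ((homeo a b c hab hbc).1.integrableOn_compact (closedCube_isCompact n)).mono_set
    (open_sub_closed n)

theorem DD_entry_integrable {n : ℕ} (a b c : Fin n) (hab : a < b) (hbc : b < c) (j i : Fin n) :
    IntegrableOn (fun p => DD a b c p j i) (openSymCube n) := by
  have hQ := (openCube_isOpen n).measurableSet
  obtain ⟨K, hK, h⟩ := DD_frob a b c hab hbc
  refine ⟨?_, ?_⟩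
  · refine (measurable_fderiv_apply_const ℝ (fun q => ff a b c q j)
      (EuclideanSpace.single i (1 : ℝ) : En n)).aestronglyMeasurable.congr ?_
    filter_upwards [ae_restrict_mem hQ, ae_restrict_of_ae (plane_ae b)] with p hp h0
    rw [(ff_hasFDerivAt a b c hbc j p (open_sub_closed n hp) h0).fderiv, rowL_single]
  · have h1 := area a b c hab hbc hK h (closedSymCube n) (closedCube_isCompact n).measurableSet
    have h2 : ff a b c ⁻¹' closedSymCube n ∩ openSymCube n = openSymCube n :=
      inter_eq_right.2 fun p hp => (homeo a b c hab hbc).2.2.1 (open_sub_closed n hp)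
    rw [h2] at h1
    rw [hasFiniteIntegral_iff_norm]
    refine lt_of_le_of_lt (lintegral_mono fun p => ?_) (h1.trans_lt
      (ENNReal.mul_lt_top ENNReal.ofReal_lt_top (closedCube_isCompact n).measure_lt_top))
    exact ENNReal.ofReal_le_ofReal (entry_le_frob _ j i)

theorem DD_integrable {n : ℕ} (a b c : Fin n) (hab : a < b) (hbc : b < c) :
    IntegrableOn (DD a b c) (openSymCube n) :=
  Integrable.of_eval fun j => Integrable.of_eval fun i => DD_entry_integrable a b c hab hbc j i

theorem line_coord {n : ℕ} (p : En n) (i j : Fin n) (t : ℝ) :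
    (p + t • EuclideanSpace.single i (1 : ℝ) : En n) j = p j + if j = i then t else 0 := by
  simp

theorem ff_line {n : ℕ} (a b c : Fin n) (hbc : b < c) (j i : Fin n) (p : En n)
    (h0 : p b = 0) (hi : i ≠ b) :
    HasLineDerivAt ℝ (fun q => ff a b c q j) (DD a b c p j i) p (EuclideanSpace.single i 1) := by
  have hv : ∀ x, vv x 0 = 0 := fun x => vv_nonpos le_rfl
  have key : (fun t : ℝ => ff a b c (p + t • EuclideanSpace.single i (1 : ℝ)) j)
      = fun t => p j + if j = i then t else 0 := by
    funext t
    by_cases hb : j = b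
    · subst hb
      rw [ff_b, line_coord, if_neg hi.symm, h0]
      simp [root5_zero]
    by_cases hc : j = c
    · subst hc
      rw [ff_c a b j hbc, line_coord p i b, if_neg hi.symm, h0, add_zero, root5_zero, hv, neg_zero,
        mob_zero, line_coord]
    · rw [ff_o a b c _ hb hc, line_coord]
  have hD : DD a b c p j i = if j = i then 1 else 0 := by
    unfold DD
    rw [h0, root5_zero, hv, vvx_nonpos le_rfl]
    by_cases hb : j = b
    · subst hb; simp [hi, hi.symm]
    by_cases hc : j = c
    · subst hc; simp [hb, hi, mobz, eq_comm]
    · simp [hb, hc, eq_comm]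
  unfold HasLineDerivAt
  rw [key, hD]
  split_ifs
  · simpa using (hasDerivAt_id (0 : ℝ)).const_add (p j)
  · simpa using hasDerivAt_const (0 : ℝ) (p j)

theorem DD_weak {n : ℕ} (a b c : Fin n) (hab : a < b) (hbc : b < c) :
    IsWeakDerivOn (openSymCube n) (ff a b c) (DD a b c) := by
  intro φ hφ j i
  have hcont : ContinuousOn (fun p => ff a b c p j) (openSymCube n) :=
    (ff_comp_cont a b c hbc j).mono (open_sub_closed n)
  have hreg : ∀ p ∈ openSymCube n, p b ≠ 0 → HasLineDerivAt ℝ (fun q => ff a b c q j)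
      (DD a b c p j i) p (EuclideanSpace.single i 1) := by
    intro p hp h0
    have := (ff_hasFDerivAt a b c hbc j p (open_sub_closed n hp) h0).hasLineDerivAt
      (EuclideanSpace.single i (1 : ℝ))
    rwa [rowL_single] at this
  refine ibp (openSymCube n) (openCube_isOpen n) (fun p => ff a b c p j)
    (fun p => DD a b c p j i) hcont (DD_entry_integrable a b c hab hbc j i) i
    {0} (countable_singleton 0) ?_ φ hφ
  intro p hp hpi
  by_cases h0 : p b = 0
  · by_cases hi : i = b
    · subst hi; exact absurd h0 hpi
    · exact ff_line a b c hbc j i p h0 hi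
  · exact hreg p hp h0

/-! ### The inverse is not Sobolev -/

theorem cos_int {M : ℝ} (hM : 2 ≤ M) :
    1 / 4 ≤ ∫ x in Ioo (-(1 / 2) : ℝ) (1 / 2), Real.cos (M * x) ^ 2 := by
  rw [← integral_Ioc_eq_integral_Ioo, ← intervalIntegral.integral_of_le (by norm_num)]
  have h0 : M ≠ 0 := by linarith
  rw [intervalIntegral.integral_comp_mul_left (fun x => Real.cos x ^ 2) h0, integral_cos_sq]
  have e : M * (-(1 / 2)) = -(M * (1 / 2)) := by ring
  rw [e, Real.cos_neg, Real.sin_neg, smul_eq_mul, inv_mul_eq_div, le_div_iff₀ (by linarith)]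
  nlinarith [sq_nonneg (Real.cos (M * (1 / 2)) + Real.sin (M * (1 / 2))),
    Real.sin_sq_add_cos_sq (M * (1 / 2))]

def Ik {n : ℕ} (b : Fin n) (k : ℕ) (j : Fin n) : Set ℝ :=
  if j = b then Ioo (5 / 4 / 2 ^ k) (7 / 4 / 2 ^ k) else Ioo (-(1 / 2)) (1 / 2)

def Uk {n : ℕ} (b : Fin n) (k : ℕ) : Set (En n) := {p | ∀ j, p j ∈ Ik b k j}

def Kc (n : ℕ) : Set (En n) := {p | ∀ j, p j ∈ Icc (-(1 / 2) : ℝ) (1 / 2)}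

theorem Ik_open {n : ℕ} (b : Fin n) (k : ℕ) (j : Fin n) : IsOpen (Ik b k j) := by
  unfold Ik; split_ifs <;> exact isOpen_Ioo

theorem Uk_open {n : ℕ} (b : Fin n) (k : ℕ) : IsOpen (Uk b k) := by
  have : Uk b k = ⋂ i, (fun p : En n => p i) ⁻¹' Ik b k i := by
    ext p; simp [Uk]
  rw [this]
  exact isOpen_iInter_of_finite fun i => (Ik_open b k i).preimage (coord_cont i)

theorem Uk_b {n : ℕ} {b : Fin n} {k : ℕ} {p : En n} (hp : p ∈ Uk b k) :
    5 / 4 < 2 ^ k * p b ∧ 2 ^ k * p b < 7 / 4 := by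
  have := hp b
  simp only [Ik, if_true, mem_Ioo] at this
  have h2 : (0 : ℝ) < 2 ^ k := by positivity
  rw [div_lt_iff₀ h2, lt_div_iff₀ h2] at this
  constructor <;> nlinarith [this.1, this.2]

theorem Uk_sub_Kc {n : ℕ} (b : Fin n) {k : ℕ} (hk : 2 ≤ k) : Uk b k ⊆ Kc n := by
  intro p hp j
  by_cases hj : j = b
  · subst hj
    obtain ⟨h1, h2⟩ := Uk_b hp
    have h4 : (4 : ℝ) ≤ 2 ^ k := by
      calc (4 : ℝ) = 2 ^ 2 := by norm_num
        _ ≤ 2 ^ k := pow_le_pow_right₀ (by norm_num) hk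
    have hpos : 0 < p j := by
      by_contra h
      push Not at h
      nlinarith
    constructor <;> nlinarith
  · have := hp j
    simp only [Ik, if_neg hj] at this
    exact Ioo_subset_Icc_self this

theorem Kc_sub (n : ℕ) : Kc n ⊆ openSymCube n := by
  intro p hp j
  have := hp j
  constructor <;> linarith [this.1, this.2]

theorem Uk_int {n : ℕ} (a b : Fin n) (hab : a < b) (k : ℕ) {M : ℝ} (hM : 2 ≤ M) :
    1 / 8 / 2 ^ k ≤ ∫ p in (Uk b k : Set (En n)), Real.cos (M * p a) ^ 2 := by
  set φ : Fin n → ℝ → ℝ := fun j x => if j = a then Real.cos (M * x) ^ 2 else 1 with hφ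
  have h1 := (EuclideanSpace.volume_preserving_symm_measurableEquiv_toLp (Fin n)).setIntegral_preimage_emb
    (MeasurableEquiv.measurableEmbedding _) (fun q : Fin n → ℝ => ∏ j, φ j (q j))
    (univ.pi (Ik b k))
  have h2 : ∀ p : En n, ∏ j, φ j (p j) = Real.cos (M * p a) ^ 2 := by
    intro p
    rw [Finset.prod_eq_single a]
    · simp [hφ]
    · intro j _ hj; simp [hφ, hj]
    · simp
  have h3 : ∫ p in (Uk b k : Set (En n)), Real.cos (M * p a) ^ 2
      = ∫ q in univ.pi (Ik b k), ∏ j, φ j (q j) := by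
    rw [← h1]
    simp_rw [← h2]
    congr 2
    ext p
    simp [Uk]
  rw [h3, volume_pi, Measure.restrict_pi_pi, integral_fintype_prod_eq_prod]
  have h4 : ∀ j, 0 ≤ ∫ x in Ik b k j, φ j x := fun j =>
    integral_nonneg fun x => by simp only [hφ]; split_ifs <;> positivity
  have ha : 1 / 4 ≤ ∫ x in Ik b k a, φ a x := by
    simp only [hφ, Ik, if_neg hab.ne, if_true]
    exact cos_int hM
  have hb : 1 / 2 / 2 ^ k ≤ ∫ x in Ik b k b, φ b x := by
    simp only [hφ, Ik, if_neg hab.ne', if_true]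
    simp
    left
    ring_nf
    rfl
  have ho : ∀ j ∉ ({a, b} : Finset (Fin n)), ∫ x in Ik b k j, φ j x = 1 := by
    intro j hj
    simp only [Finset.mem_insert, Finset.mem_singleton, not_or] at hj
    simp only [hφ, Ik, if_neg hj.1, if_neg hj.2]
    simp
    norm_num
  have h5 : ∏ j, ∫ x in Ik b k j, φ j x = ∏ j ∈ {a, b}, ∫ x in Ik b k j, φ j x :=
    (Finset.prod_subset (Finset.subset_univ _) fun j _ hj => ho j hj).symm
  rw [h5, Finset.prod_pair hab.ne]
  calc (1 : ℝ) / 8 / 2 ^ k = 1 / 4 * (1 / 2 / 2 ^ k) := by ring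
    _ ≤ _ := mul_le_mul ha hb (by positivity) (h4 a)

def Gk {n : ℕ} (a c : Fin n) (k : ℕ) (p : En n) : ℝ :=
  mobt (p c) ((1 / 4) * (1 / 4) ^ k * Real.sin (16 ^ k * p a))
    * ((1 / 4) * (1 / 4) ^ k * (16 ^ k * Real.cos (16 ^ k * p a)))

theorem tau_bound (k : ℕ) (x : ℝ) : |(1 / 4) * (1 / 4) ^ k * Real.sin (16 ^ k * x)| ≤ 1 / 3 := by
  rw [abs_mul, abs_of_nonneg (by positivity : (0 : ℝ) ≤ (1 / 4) * (1 / 4) ^ k)]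
  have h1 : ((1 : ℝ) / 4) ^ k ≤ 1 := pow_le_one₀ (by norm_num) (by norm_num)
  have h0 : (0 : ℝ) ≤ (1 / 4) ^ k := by positivity
  have := Real.abs_sin_le_one (16 ^ k * x)
  have h3 := abs_nonneg (Real.sin (16 ^ k * x))
  nlinarith

theorem Gk_cont {n : ℕ} (a c : Fin n) (k : ℕ) : ContinuousOn (Gk a c k) (Kc n) := by
  unfold Gk mobt
  refine ContinuousOn.mul (ContinuousOn.div (by fun_prop) (by fun_prop) ?_) (by fun_prop)
  intro p hp
  have hz : |p c| ≤ 1 := by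
    have := hp c
    rw [abs_le]; constructor <;> linarith [this.1, this.2]
  have := mob_den hz (tau_bound k (p a))
  exact pow_ne_zero _ (by linarith)

theorem Gk_integrable {n : ℕ} (a b c : Fin n) {k : ℕ} (hk : 2 ≤ k) :
    IntegrableOn (Gk a c k) (Uk b k) :=
  ((Gk_cont a c k).integrableOn_compact (box_isCompact n _ _)).mono_set (Uk_sub_Kc b hk)

theorem Gk_lower {n : ℕ} (a b c : Fin n) (hbc : b < c) {k : ℕ} (p : En n)
    (hp : p ∈ Uk b k) : 4 ^ k / 16 * Real.cos (16 ^ k * p a) ^ 2 ≤ |Gk a c k p| := by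
  have hz : |p c| ≤ 1 / 2 := by
    have := hp c
    simp only [Ik, if_neg hbc.ne'] at this
    rw [abs_le]; constructor <;> linarith [this.1, this.2]
  have h1 := mobt_lower hz (tau_bound k (p a))
  have e : ((1 : ℝ) / 4) ^ k * 16 ^ k = 4 ^ k := by rw [← mul_pow]; norm_num
  have e2 : Gk a c k p = mobt (p c) ((1 / 4) * (1 / 4) ^ k * Real.sin (16 ^ k * p a))
      * (1 / 4 * 4 ^ k * Real.cos (16 ^ k * p a)) := by
    rw [← e]; unfold Gk; ring
  rw [e2, abs_mul, abs_of_nonneg (by linarith), abs_mul,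
    abs_of_nonneg (by positivity : (0 : ℝ) ≤ 1 / 4 * 4 ^ k)]
  set C := Real.cos (16 ^ k * p a) with hC
  have hc : C ^ 2 ≤ |C| := by
    rw [← sq_abs]
    have := Real.abs_cos_le_one (16 ^ k * p a)
    have h0 := abs_nonneg C
    rw [← hC] at this
    nlinarith
  calc 4 ^ k / 16 * C ^ 2 ≤ 4 ^ k / 16 * |C| := by gcongr
    _ = 1 / 4 * (1 / 4 * 4 ^ k * |C|) := by ring
    _ ≤ _ := by gcongr

theorem gg_line {n : ℕ} (a b c : Fin n) (hab : a < b) (hbc : b < c) {k : ℕ} (hk : 2 ≤ k)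
    (p : En n) (hp : p ∈ Uk b k) :
    HasLineDerivAt ℝ (fun q => gg a b c q c) (Gk a c k p) p (EuclideanSpace.single a 1) := by
  have hac := hab.trans hbc
  have hz : |p c| ≤ 1 := by
    have := Uk_sub_Kc b hk hp c
    rw [abs_le]; constructor <;> linarith [this.1, this.2]
  have hU := Uk_b hp
  unfold HasLineDerivAt
  have key : (fun t : ℝ => gg a b c (p + t • EuclideanSpace.single a (1 : ℝ)) c)
      = fun t => mob (p c) ((1 / 4) * (1 / 4) ^ k * Real.sin (16 ^ k * (p a + t))) := by
    funext t
    rw [gg_c a b c hbc, line_coord, line_coord, line_coord, if_neg hac.ne', if_neg hab.ne',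
      if_pos rfl, add_zero, add_zero, vv_core hU.1 hU.2]
  rw [key]
  have hs : HasDerivAt (fun t : ℝ => (1 / 4) * (1 / 4) ^ k * Real.sin (16 ^ k * (p a + t)))
      ((1 / 4) * (1 / 4) ^ k * (16 ^ k * Real.cos (16 ^ k * p a))) 0 := by
    have h := ((((hasDerivAt_id (0 : ℝ)).const_add (p a)).const_mul ((16 : ℝ) ^ k)).sin).const_mul
      ((1 / 4 : ℝ) * (1 / 4) ^ k)
    refine h.congr_deriv ?_
    simp
    ring
  have hm := mob_hasFDerivAt (hasDerivAt_const (0 : ℝ) (p c)).hasFDerivAt hs.hasFDerivAt hz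
    (tau_bound k _)
  refine hm.hasDerivAt.congr_deriv ?_
  simp [Gk]

theorem weak_ae {n : ℕ} (a b c : Fin n) (hab : a < b) (hbc : b < c)
    (Dg : En n → Fin n → Fin n → ℝ) (hI : IntegrableOn (fun p => Dg p c a) (Kc n))
    (hw : IsWeakDerivOn (openSymCube n) (gg a b c) Dg) {k : ℕ} (hk : 2 ≤ k) :
    ∀ᵐ p : En n, p ∈ Uk b k → Dg p c a = Gk a c k p := by
  have hUK := Uk_sub_Kc (n := n) b hk
  have hUQ := hUK.trans (Kc_sub n)
  have hDU : IntegrableOn (fun p => Dg p c a) (Uk b k) := hI.mono_set hUK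
  have hGU := Gk_integrable a b c hk
  have main := IsOpen.ae_eq_zero_of_integral_contDiff_smul_eq_zero (μ := volume)
    (f := fun p => Dg p c a - Gk a c k p) (Uk_open b k)
    (hDU.sub hGU).locallyIntegrableOn ?_
  · filter_upwards [main] with p hp hpU
    linarith [hp hpU]
  intro φ h1 h2 h3
  have hz : ∀ p ∉ Uk b k, φ p = 0 := fun p hp => image_eq_zero_of_notMem_tsupport fun h => hp (h3 h)
  have hz' : ∀ p ∉ Uk b k, fderiv ℝ φ p = 0 := fun p hp =>
    image_eq_zero_of_notMem_tsupport fun h => hp (h3 (tsupport_fderiv_subset ℝ h))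
  have e1 := hw φ ⟨h1, h2, h3.trans hUQ⟩ c a
  have e2 := ibp (Uk b k) (Uk_open b k) (fun p => gg a b c p c) (Gk a c k)
    ((gg_comp_cont a b c hbc c).mono (hUQ.trans (open_sub_closed n))) hGU a ∅ countable_empty
    (fun p hp _ => gg_line a b c hab hbc hk p hp) φ ⟨h1, h2, h3⟩
  have red : ∀ (s : Set (En n)) (u : En n → ℝ), Uk b k ⊆ s → (∀ p ∉ Uk b k, u p = 0) →
      ∫ p in s, u p = ∫ p, u p := fun s u hs hu =>
    setIntegral_eq_integral_of_forall_compl_eq_zero fun p hp => hu p fun h => hp (hs h)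
  have z1 : ∀ p ∉ Uk b k,
      gg a b c p c * fderiv ℝ φ p (EuclideanSpace.single a 1) = 0 := by
    intro p hp; rw [hz' p hp]; simp
  have z2 : ∀ p ∉ Uk b k, φ p * Dg p c a = 0 := by
    intro p hp; rw [hz p hp]; simp
  have z3 : ∀ p ∉ Uk b k, φ p * Gk a c k p = 0 := by
    intro p hp; rw [hz p hp]; simp
  have z4 : ∀ p ∉ Uk b k, φ p • (Dg p c a - Gk a c k p) = 0 := by
    intro p hp; rw [hz p hp]; simp
  rw [red _ _ hUQ z1, red _ _ hUQ z2] at e1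
  rw [red _ _ subset_rfl z1, red _ _ subset_rfl z3] at e2
  have e3 : ∫ p, φ p * Dg p c a = ∫ p, φ p * Gk a c k p := by linarith
  obtain ⟨B, hB⟩ := h2.exists_bound_of_continuous h1.continuous
  have i1 : Integrable (fun p => φ p * Dg p c a) (volume.restrict (Uk b k)) :=
    hDU.bdd_mul h1.continuous.aestronglyMeasurable (Eventually.of_forall hB)
  have i2 : Integrable (fun p => φ p * Gk a c k p) (volume.restrict (Uk b k)) :=
    hGU.bdd_mul h1.continuous.aestronglyMeasurable (Eventually.of_forall hB)
  rw [← red _ _ subset_rfl z4]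
  simp only [smul_eq_mul, mul_sub]
  rw [integral_sub i1 i2, red _ _ subset_rfl z2, red _ _ subset_rfl z3, e3, sub_self]

theorem not_sobolev {n : ℕ} (a b c : Fin n) (hab : a < b) (hbc : b < c) :
    ¬ ∃ Dg : En n → Fin n → Fin n → ℝ,
          LocallyIntegrableOn Dg (openSymCube n) volume ∧
          IsWeakDerivOn (openSymCube n) (gg a b c) Dg := by
  rintro ⟨Dg, hL, hw⟩
  have hI0 : IntegrableOn Dg (Kc n) :=
    hL.integrableOn_compact_subset (Kc_sub n) (box_isCompact n _ _)
  have hI : IntegrableOn (fun p => Dg p c a) (Kc n) := Integrable.eval (Integrable.eval hI0 c) a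
  have bound : ∀ k, 2 ≤ k → 2 ^ k / 128 ≤ ∫ p in Kc n, |Dg p c a| := by
    intro k hk
    have hUm := (Uk_open (n := n) b k).measurableSet
    have hUK := Uk_sub_Kc (n := n) b hk
    have hM : (2 : ℝ) ≤ 16 ^ k := by
      calc (2 : ℝ) ≤ 16 ^ 2 := by norm_num
        _ ≤ 16 ^ k := pow_le_pow_right₀ (by norm_num) hk
    have h1 := Uk_int a b hab k hM
    have hcI : IntegrableOn (fun p : En n => 4 ^ k / 16 * Real.cos (16 ^ k * p a) ^ 2) (Uk b k) := by
      have : Continuous (fun p : En n => 4 ^ k / 16 * Real.cos (16 ^ k * p a) ^ 2) := by fun_prop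
      exact (this.continuousOn.integrableOn_compact (box_isCompact n _ _)).mono_set hUK
    calc (2 : ℝ) ^ k / 128 = 4 ^ k / 16 * (1 / 8 / 2 ^ k) := by
          have : (4 : ℝ) ^ k = 2 ^ k * 2 ^ k := by rw [← mul_pow]; norm_num
          rw [this]; field_simp; norm_num
      _ ≤ 4 ^ k / 16 * ∫ p in (Uk b k : Set (En n)), Real.cos (16 ^ k * p a) ^ 2 := by gcongr
      _ = ∫ p in (Uk b k : Set (En n)), 4 ^ k / 16 * Real.cos (16 ^ k * p a) ^ 2 := by
          rw [integral_const_mul]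
      _ ≤ ∫ p in Uk b k, |Dg p c a| := by
          refine setIntegral_mono_on_ae hcI (hI.mono_set hUK).abs hUm ?_
          filter_upwards [weak_ae a b c hab hbc Dg hI hw hk] with p hp hpU
          rw [hp hpU]
          exact Gk_lower a b c hbc p hpU
      _ ≤ ∫ p in Kc n, |Dg p c a| :=
          setIntegral_mono_set hI.abs (Eventually.of_forall fun _ => abs_nonneg _)
            (Eventually.of_forall hUK)
  obtain ⟨k, hk⟩ := pow_unbounded_of_one_lt (128 * ∫ p in Kc n, |Dg p c a|) (one_lt_two (α := ℝ))
  have h2 := bound (k + 2) (by omega)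
  have : (2 : ℝ) ^ (k + 2) = 4 * 2 ^ k := by ring
  have h3 : (0 : ℝ) < 2 ^ k := by positivity
  rw [this] at h2
  linarith

/-- **Example (Statement 14).** For every `n ≥ 3` there is a homeomorphism `f` of
`[-1,1]ⁿ` onto itself, lying in `W^{1,1}((-1,1)ⁿ, ℝⁿ)`, with `|Df(x)| ≤ K·|J_f(x)|`
a.e. (hence `|Df|(f⁻¹(A)) ≤ K·Lⁿ(A)` for all Borel sets `A`), whose inverse is not a
Sobolev mapping. -/
theorem exists_sobolev_homeo_with_nonsobolev_inverse (n : ℕ) (hn : 3 ≤ n) :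
    ∃ f g : En n → En n,
      IsHomeoOn f g (closedSymCube n) (closedSymCube n) ∧
      (∃ Df : En n → Fin n → Fin n → ℝ,
        IntegrableOn f (openSymCube n) volume ∧
        IntegrableOn Df (openSymCube n) volume ∧
        IsWeakDerivOn (openSymCube n) f Df ∧
        ∃ K : ℝ, 0 < K ∧
          (∀ᵐ x ∂volume.restrict (openSymCube n),
            frobNorm (Df x) ≤ K * |Matrix.det (Matrix.of fun j i => Df x j i)|) ∧
          (∀ A : Set (En n), MeasurableSet A →
            ∫⁻ x in f ⁻¹' A ∩ openSymCube n,
                ENNReal.ofReal (frobNorm (Df x)) ∂volume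
              ≤ ENNReal.ofReal K * volume A)) ∧
      ¬ ∃ Dg : En n → Fin n → Fin n → ℝ,
          LocallyIntegrableOn Dg (openSymCube n) volume ∧
          IsWeakDerivOn (openSymCube n) g Dg := by
  have hab : (⟨0, by omega⟩ : Fin n) < ⟨1, by omega⟩ := by simp
  have hbc : (⟨1, by omega⟩ : Fin n) < ⟨2, by omega⟩ := by simp
  generalize (⟨0, by omega⟩ : Fin n) = a at hab
  generalize (⟨1, by omega⟩ : Fin n) = b at hab hbc
  generalize (⟨2, by omega⟩ : Fin n) = c at hbc
  obtain ⟨K, hK, h⟩ := DD_frob a b c hab hbc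
  refine ⟨ff a b c, gg a b c, homeo a b c hab hbc, ⟨DD a b c, ff_integrable a b c hab hbc,
    DD_integrable a b c hab hbc, DD_weak a b c hab hbc, K, hK, ?_, ?_⟩,
    not_sobolev a b c hab hbc⟩
  · filter_upwards [ae_restrict_mem (openCube_isOpen n).measurableSet,
      ae_restrict_of_ae (plane_ae b)] with p hp h0
    exact h p (open_sub_closed n hp) h0
  · intro A hA
    exact area a b c hab hbc hK h A hA
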